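/- Fourth-order three-body error term (paper eq. A18d): for pairwise distinct indices i, j, k and any phase-space point (x,p) with r_ij ≠ 0 and r_ik ≠ 0, the left-nested canonical Poisson bracket satisfies {{{{V_ij, T}, V_ik}, T}, V_ij}(x,p) = −2 (G³ (m i)(m j)(m k)((m i)+(m j)) / (r_ij⁶ r_ik³)) · (x_ij · x_ik) − (G³ (m i)(m j)²(m k) / (r_ij⁶ r_ik⁵)) · ( 3 (x_ij · x_ik)² − r_ij² r_ik² ). -/

import Mathlib

open scoped RealInnerProductSpace BigOperators

noncomputable section

/-- Three-dimensional Euclidean space. -/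
abbrev E3 : Type := EuclideanSpace ℝ (Fin 3)

/-- Phase space for `N` particles: positions and momenta. -/
abbrev Phase (N : ℕ) : Type := (Fin N → E3) × (Fin N → E3)

/-- Gradient of a phase-space function with respect to the `k`-th position. -/
def gradPos {N : ℕ} (A : Phase N → ℝ) (k : Fin N) (w : Phase N) : E3 :=
  gradient (fun y => A (Function.update w.1 k y, w.2)) (w.1 k)

/-- Gradient of a phase-space function with respect to the `k`-th momentum. -/
def gradMom {N : ℕ} (A : Phase N → ℝ) (k : Fin N) (w : Phase N) : E3 :=
  gradient (fun y => A (w.1, Function.update w.2 k y)) (w.2 k)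

/-- Canonical Poisson bracket of two phase-space functions. -/
def poisson {N : ℕ} (A B : Phase N → ℝ) (w : Phase N) : ℝ :=
  ∑ k, (⟪gradPos A k w, gradMom B k w⟫ - ⟪gradMom A k w, gradPos B k w⟫)

/-- Kinetic energy `T = Σ_i ‖p_i‖²/(2 m_i)`. -/
def kinetic {N : ℕ} (m : Fin N → ℝ) (w : Phase N) : ℝ :=
  ∑ i, ‖w.2 i‖ ^ 2 / (2 * m i)

/-- Pair potential `V_ij = −G m_i m_j / ‖x_i − x_j‖`. -/
def pairPot {N : ℕ} (G : ℝ) (m : Fin N → ℝ) (i j : Fin N) (w : Phase N) : ℝ :=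
  -(G * m i * m j) / ‖w.1 i - w.1 j‖

theorem gradMom_kinetic {N : ℕ} (m : Fin N → ℝ) (l : Fin N) (w : Phase N) :
    gradMom (kinetic m) l w = (1 / m l) • w.2 l := by
  unfold gradMom
  apply HasGradientAt.gradient
  rw [hasGradientAt_iff_hasFDerivAt]
  have h1 : ∀ q ∈ Finset.univ, HasFDerivAt (fun y : E3 => ‖Function.update w.2 l y q‖ ^ 2 / (2 * m q))
      (if q = l then InnerProductSpace.toDual ℝ E3 ((1 / m l) • w.2 l) else 0) (w.2 l) := by
    intro q _
    by_cases h : q = l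
    · subst h
      simp only [Function.update_self, if_true]
      have := ((hasStrictFDerivAt_norm_sq (w.2 q)).hasFDerivAt).mul_const ((2 * m q)⁻¹)
      simp only [div_eq_mul_inv]
      refine this.congr_fderiv ?_
      ext v
      simp [inner_smul_left]
      ring
    · simp only [Function.update_of_ne h, if_neg h]
      exact hasFDerivAt_const _ _
  have h2 := HasFDerivAt.fun_sum h1
  simp only [kinetic]
  refine h2.congr_fderiv ?_
  simp

theorem gradPos_kinetic {N : ℕ} (m : Fin N → ℝ) (l : Fin N) (w : Phase N) :
    gradPos (kinetic m) l w = 0 := by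
  unfold gradPos kinetic
  exact gradient_const (𝕜 := ℝ) (w.1 l) (∑ i, ‖w.2 i‖ ^ 2 / (2 * m i))

theorem gradMom_of_indep {N : ℕ} (A : Phase N → ℝ) (hA : ∀ x p p', A (x, p) = A (x, p'))
    (l : Fin N) (w : Phase N) : gradMom A l w = 0 := by
  unfold gradMom
  have : (fun y => A (w.1, Function.update w.2 l y)) = fun _ => A (w.1, w.2) := by
    funext y; exact hA _ _ _
  rw [this]
  exact gradient_const _ _

theorem gradPos_indep {N : ℕ} (A : Phase N → ℝ) (hA : ∀ x p p', A (x, p) = A (x, p'))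
    (l : Fin N) (x p p' : Fin N → E3) : gradPos A l (x, p) = gradPos A l (x, p') := by
  unfold gradPos
  congr 1
  funext y; exact hA _ _ _

theorem poisson_kinetic {N : ℕ} (A : Phase N → ℝ) (m : Fin N → ℝ) (w : Phase N) :
    poisson A (kinetic m) w = ∑ q, ⟪gradPos A q w, (1 / m q) • w.2 q⟫ := by
  unfold poisson
  simp only [gradMom_kinetic, gradPos_kinetic, inner_zero_right, sub_zero]

theorem gradMom_poisson_kinetic {N : ℕ} (A : Phase N → ℝ)
    (hA : ∀ x p p', A (x, p) = A (x, p')) (m : Fin N → ℝ) (l : Fin N) (w : Phase N) :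
    gradMom (poisson A (kinetic m)) l w = (1 / m l) • gradPos A l w := by
  unfold gradMom
  apply HasGradientAt.gradient
  rw [hasGradientAt_iff_hasFDerivAt]
  have h1 : ∀ q ∈ Finset.univ, HasFDerivAt
      (fun y : E3 => ⟪gradPos A q w, (1 / m q) • Function.update w.2 l y q⟫)
      (if q = l then InnerProductSpace.toDual ℝ E3 ((1 / m l) • gradPos A l w) else 0) (w.2 l) := by
    intro q _
    by_cases h : q = l
    · subst h
      simp only [Function.update_self, if_true]
      have := (InnerProductSpace.toDual ℝ E3 ((1 / m q) • gradPos A q w)).hasFDerivAt (x := w.2 q)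
      refine this.congr_of_eventuallyEq (Filter.Eventually.of_forall fun y => ?_)
      simp [inner_smul_left, inner_smul_right]
    · simp only [Function.update_of_ne h, if_neg h]
      exact hasFDerivAt_const _ _
  have h2 := HasFDerivAt.fun_sum h1
  have h3 : (fun y => poisson A (kinetic m) (w.1, Function.update w.2 l y)) =
      fun y => ∑ q, ⟪gradPos A q w, (1 / m q) • Function.update w.2 l y q⟫ := by
    funext y
    rw [poisson_kinetic]
    refine Finset.sum_congr rfl fun q _ => ?_
    rw [gradPos_indep A hA q w.1 _ w.2]
  rw [h3]
  refine h2.congr_fderiv ?_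
  simp

theorem poisson_poisson {N : ℕ} (A V : Phase N → ℝ)
    (hA : ∀ x p p', A (x, p) = A (x, p')) (hV : ∀ x p p', V (x, p) = V (x, p'))
    (m : Fin N → ℝ) (w : Phase N) :
    poisson (poisson A (kinetic m)) V w =
      - ∑ q, (1 / m q) * ⟪gradPos A q w, gradPos V q w⟫ := by
  rw [poisson, ← Finset.sum_neg_distrib]
  refine Finset.sum_congr rfl fun q _ => ?_
  rw [gradMom_of_indep V hV, gradMom_poisson_kinetic A hA, inner_smul_left]
  simp

theorem hasFDerivAt_dist_left (b y : E3) (h : ‖y - b‖ ≠ 0) :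
    HasFDerivAt (fun y : E3 => ‖y - b‖) (‖y - b‖⁻¹ • innerSL ℝ (y - b)) y := by
  have h0 : HasFDerivAt (fun y : E3 => y - b) (ContinuousLinearMap.id ℝ E3) y :=
    (hasFDerivAt_id y).sub_const b
  have h1 := (h0.norm_sq).sqrt (pow_ne_zero 2 h)
  simp only [Real.sqrt_sq (norm_nonneg _)] at h1
  refine h1.congr_fderiv ?_
  ext v
  simp
  field_simp

theorem hasFDerivAt_inv_dist (b y : E3) (h : ‖y - b‖ ≠ 0) :
    HasFDerivAt (fun y : E3 => ‖y - b‖⁻¹) (-(‖y - b‖ ^ 3)⁻¹ • innerSL ℝ (y - b)) y := by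
  have h1 := (hasDerivAt_inv h).comp_hasFDerivAt y (hasFDerivAt_dist_left b y h)
  refine h1.congr_fderiv ?_
  ext v
  simp
  field_simp

theorem hasFDerivAt_inv_cube (b y : E3) (h : ‖y - b‖ ≠ 0) :
    HasFDerivAt (fun y : E3 => (‖y - b‖ ^ 3)⁻¹)
      (-(3 * (‖y - b‖ ^ 5)⁻¹) • innerSL ℝ (y - b)) y := by
  have h1 := ((hasDerivAt_pow 3 ‖y - b‖).fun_inv (pow_ne_zero 3 h)).comp_hasFDerivAt y
    (hasFDerivAt_dist_left b y h)
  refine h1.congr_fderiv ?_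
  ext v
  simp
  field_simp

theorem pairPot_indep {N : ℕ} (G : ℝ) (m : Fin N → ℝ) (i j : Fin N) :
    ∀ x p p', pairPot G m i j (x, p) = pairPot G m i j (x, p') := fun _ _ _ => rfl

theorem hasFDerivAt_pot (c : ℝ) (b y : E3) (h : ‖y - b‖ ≠ 0) :
    HasGradientAt (fun y : E3 => -c / ‖y - b‖) ((c / ‖y - b‖ ^ 3) • (y - b)) y := by
  rw [hasGradientAt_iff_hasFDerivAt]
  have h1 := (hasFDerivAt_inv_dist b y h).const_mul (-c)
  simp only [div_eq_mul_inv]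
  refine h1.congr_fderiv ?_
  ext v
  simp [inner_smul_left]
  field_simp

theorem gradPos_pot_fst {N : ℕ} (G : ℝ) (m : Fin N → ℝ) (i j : Fin N) (hij : i ≠ j)
    (w : Phase N) (h : ‖w.1 i - w.1 j‖ ≠ 0) :
    gradPos (pairPot G m i j) i w =
      ((G * m i * m j) / ‖w.1 i - w.1 j‖ ^ 3) • (w.1 i - w.1 j) := by
  unfold gradPos pairPot
  simp only [Function.update_self, Function.update_of_ne hij.symm]
  exact (hasFDerivAt_pot _ _ _ h).gradient

theorem gradPos_pot_snd {N : ℕ} (G : ℝ) (m : Fin N → ℝ) (i j : Fin N) (hij : i ≠ j)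
    (w : Phase N) (h : ‖w.1 i - w.1 j‖ ≠ 0) :
    gradPos (pairPot G m i j) j w =
      -(((G * m i * m j) / ‖w.1 i - w.1 j‖ ^ 3) • (w.1 i - w.1 j)) := by
  unfold gradPos pairPot
  simp only [Function.update_self, Function.update_of_ne hij]
  simp only [norm_sub_rev (w.1 i)] at h ⊢
  rw [(hasFDerivAt_pot _ _ _ h).gradient, ← smul_neg, neg_sub]

theorem gradPos_pot_other {N : ℕ} (G : ℝ) (m : Fin N → ℝ) (i j l : Fin N) (hi : i ≠ l)
    (hj : j ≠ l) (w : Phase N) :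
    gradPos (pairPot G m i j) l w = 0 := by
  unfold gradPos pairPot
  simp only [Function.update_of_ne hi, Function.update_of_ne hj]
  exact gradient_const _ _

/-- `{{V_ij,T},V_ik}` in closed form. -/
theorem second_order {N : ℕ} (G : ℝ) (m : Fin N → ℝ) (hm : ∀ i, 0 < m i) (i j k : Fin N)
    (hij : i ≠ j) (hik : i ≠ k) (hjk : j ≠ k) (w : Phase N)
    (h1 : ‖w.1 i - w.1 j‖ ≠ 0) (h2 : ‖w.1 i - w.1 k‖ ≠ 0) :
    poisson (poisson (pairPot G m i j) (kinetic m)) (pairPot G m i k) w =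
      -(G ^ 2 * m i * m j * m k) * (⟪w.1 i - w.1 j, w.1 i - w.1 k⟫ *
        ((‖w.1 i - w.1 j‖ ^ 3)⁻¹ * (‖w.1 i - w.1 k‖ ^ 3)⁻¹)) := by
  rw [poisson_poisson _ _ (pairPot_indep _ _ _ _) (pairPot_indep _ _ _ _),
    Finset.sum_eq_single i]
  · rw [gradPos_pot_fst _ _ _ _ hij _ h1, gradPos_pot_fst _ _ _ _ hik _ h2]
    have := (hm i).ne'
    simp only [inner_smul_left, inner_smul_right, RCLike.conj_to_real]
    field_simp
  · intro q _ hq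
    by_cases hqj : q = j
    · subst hqj
      rw [gradPos_pot_other G m i k q hij hjk.symm]
      simp
    · rw [gradPos_pot_other G m i j q (Ne.symm hq) (Ne.symm hqj)]
      simp
  · simp

theorem second_order_indep {N : ℕ} (G : ℝ) (m : Fin N → ℝ) (i j k : Fin N) :
    ∀ x p p', poisson (poisson (pairPot G m i j) (kinetic m)) (pairPot G m i k) (x, p) =
      poisson (poisson (pairPot G m i j) (kinetic m)) (pairPot G m i k) (x, p') := by
  intro x p p'
  rw [poisson_poisson _ _ (pairPot_indep _ _ _ _) (pairPot_indep _ _ _ _),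
    poisson_poisson _ _ (pairPot_indep _ _ _ _) (pairPot_indep _ _ _ _)]
  rfl

theorem inner_gradient_eq (f : E3 → ℝ) (f' : E3 →L[ℝ] ℝ) (y v : E3) (h : HasFDerivAt f f' y) :
    ⟪gradient f y, v⟫ = f' v := by
  rw [gradient, InnerProductSpace.toDual_symm_apply, h.fderiv]

theorem ne_eventually (b y : E3) (h : ‖y - b‖ ≠ 0) : ∀ᶠ z in nhds y, ‖z - b‖ ≠ 0 := by
  have : Continuous fun z : E3 => ‖z - b‖ := by fun_prop
  exact this.continuousAt.eventually_ne h

theorem inner_gradPos_fst {N : ℕ} (G : ℝ) (m : Fin N → ℝ) (hm : ∀ i, 0 < m i) (i j k : Fin N)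
    (hij : i ≠ j) (hik : i ≠ k) (hjk : j ≠ k) (w : Phase N)
    (h1 : ‖w.1 i - w.1 j‖ ≠ 0) (h2 : ‖w.1 i - w.1 k‖ ≠ 0) (a b : E3)
    (ha : a = w.1 i - w.1 j) (hb : b = w.1 i - w.1 k) :
    ⟪gradPos (poisson (poisson (pairPot G m i j) (kinetic m)) (pairPot G m i k)) i w, a⟫ =
      -(G ^ 2 * m i * m j * m k) * (-2 * ⟪a, b⟫ / (‖a‖ ^ 3 * ‖b‖ ^ 3)
        + (‖a‖ ^ 2 * ‖b‖ ^ 2 - 3 * ⟪a, b⟫ ^ 2) / (‖a‖ ^ 3 * ‖b‖ ^ 5)) := by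
  unfold gradPos
  have ev : (fun y => poisson (poisson (pairPot G m i j) (kinetic m)) (pairPot G m i k)
      (Function.update w.1 i y, w.2)) =ᶠ[nhds (w.1 i)] fun y =>
      -(G ^ 2 * m i * m j * m k) * (⟪y - w.1 j, y - w.1 k⟫ *
        ((‖y - w.1 j‖ ^ 3)⁻¹ * (‖y - w.1 k‖ ^ 3)⁻¹)) := by
    filter_upwards [ne_eventually _ _ h1, ne_eventually _ _ h2] with y hy1 hy2
    rw [second_order G m hm i j k hij hik hjk]
    · simp only [Function.update_self, Function.update_of_ne hij.symm,
        Function.update_of_ne hik.symm]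
    · simpa only [Function.update_self, Function.update_of_ne hij.symm] using hy1
    · simpa only [Function.update_self, Function.update_of_ne hik.symm] using hy2
  have d (c : E3) : HasFDerivAt (fun y : E3 => y - c) (ContinuousLinearMap.id ℝ E3) (w.1 i) :=
    (hasFDerivAt_id _).sub_const c
  have D := (((d (w.1 j)).inner ℝ (d (w.1 k))).mul
    ((hasFDerivAt_inv_cube _ _ h1).mul
      (hasFDerivAt_inv_cube _ _ h2))).const_mul
        (-(G ^ 2 * m i * m j * m k))
  rw [inner_gradient_eq _ _ _ _ (D.congr_of_eventuallyEq ev)]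
  rw [← ha] at h1
  rw [← hb] at h2
  simp [real_inner_comm a b, ← ha, ← hb]
  field_simp
  ring

theorem inner_gradPos_snd {N : ℕ} (G : ℝ) (m : Fin N → ℝ) (hm : ∀ i, 0 < m i) (i j k : Fin N)
    (hij : i ≠ j) (hik : i ≠ k) (hjk : j ≠ k) (w : Phase N)
    (h1 : ‖w.1 i - w.1 j‖ ≠ 0) (h2 : ‖w.1 i - w.1 k‖ ≠ 0) (a b : E3)
    (ha : a = w.1 i - w.1 j) (hb : b = w.1 i - w.1 k) :
    ⟪gradPos (poisson (poisson (pairPot G m i j) (kinetic m)) (pairPot G m i k)) j w, a⟫ =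
      -(G ^ 2 * m i * m j * m k) * (2 * ⟪a, b⟫ / (‖a‖ ^ 3 * ‖b‖ ^ 3)) := by
  unfold gradPos
  have h1' : ‖w.1 j - w.1 i‖ ≠ 0 := by rwa [norm_sub_rev]
  have ev : (fun y => poisson (poisson (pairPot G m i j) (kinetic m)) (pairPot G m i k)
      (Function.update w.1 j y, w.2)) =ᶠ[nhds (w.1 j)] fun y =>
      -(G ^ 2 * m i * m j * m k) * (⟪y - w.1 i, -b⟫ *
        ((‖y - w.1 i‖ ^ 3)⁻¹ * (‖b‖ ^ 3)⁻¹)) := by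
    filter_upwards [ne_eventually _ _ h1'] with y hy1
    rw [second_order G m hm i j k hij hik hjk]
    · simp only [Function.update_self, Function.update_of_ne hij,
        Function.update_of_ne hjk.symm, ← hb, inner_neg_right, ← inner_neg_left, neg_sub,
        norm_sub_rev y]
    · rw [norm_sub_rev]
      simpa only [Function.update_self, Function.update_of_ne hij] using hy1
    · simpa only [Function.update_of_ne hij, Function.update_of_ne hjk.symm] using h2
  have d (c : E3) : HasFDerivAt (fun y : E3 => y - c) (ContinuousLinearMap.id ℝ E3) (w.1 j) :=
    (hasFDerivAt_id _).sub_const c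
  have D := (((d (w.1 i)).inner ℝ (hasFDerivAt_const (-b) (w.1 j))).mul
    ((hasFDerivAt_inv_cube _ _ h1').mul_const
      ((‖b‖ ^ 3)⁻¹))).const_mul
        (-(G ^ 2 * m i * m j * m k))
  rw [inner_gradient_eq _ _ _ _ (D.congr_of_eventuallyEq ev)]
  have ha' : w.1 j - w.1 i = -a := by rw [ha, neg_sub]
  rw [← ha] at h1
  rw [← hb] at h2
  rw [ha']
  simp [real_inner_comm a b]
  field_simp
  ring

/-- Fourth-order three-body error term (paper eq. A18d):
`{{{{V_ij,T},V_ik},T},V_ij}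
  = −2 (G³ m_i m_j m_k (m_i + m_j) / (r_ij⁶ r_ik³)) (x_ij·x_ik)
    − (G³ m_i m_j² m_k / (r_ij⁶ r_ik⁵)) (3 (x_ij·x_ik)² − r_ij² r_ik²)`. -/
theorem fourth_order_VTVikTV_three_body {N : ℕ} (G : ℝ) (hG : 0 < G)
    (m : Fin N → ℝ) (hm : ∀ i, 0 < m i) (i j k : Fin N)
    (hij : i ≠ j) (hik : i ≠ k) (hjk : j ≠ k) (w : Phase N)
    (hrij : ‖w.1 i - w.1 j‖ ≠ 0) (hrik : ‖w.1 i - w.1 k‖ ≠ 0)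
    (xij xik : E3)
    (hxij : xij = w.1 i - w.1 j) (hxik : xik = w.1 i - w.1 k) :
    poisson (poisson (poisson (poisson (pairPot G m i j) (kinetic m))
        (pairPot G m i k)) (kinetic m)) (pairPot G m i j) w =
      -2 * (G ^ 3 * m i * m j * m k * (m i + m j) /
          (‖xij‖ ^ 6 * ‖xik‖ ^ 3)) * ⟪xij, xik⟫ -
      G ^ 3 * m i * m j ^ 2 * m k / (‖xij‖ ^ 6 * ‖xik‖ ^ 5) *
        (3 * ⟪xij, xik⟫ ^ 2 - ‖xij‖ ^ 2 * ‖xik‖ ^ 2) := by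
  subst hxij hxik
  have hi := (hm i).ne'
  have hj := (hm j).ne'
  rw [poisson_poisson _ _ (second_order_indep G m i j k) (pairPot_indep _ _ _ _),
    Finset.sum_eq_add i j hij]
  · rw [gradPos_pot_fst _ _ _ _ hij _ hrij, gradPos_pot_snd _ _ _ _ hij _ hrij,
      inner_neg_right, inner_smul_right, inner_smul_right,
      inner_gradPos_fst G m hm i j k hij hik hjk w hrij hrik _ _ rfl rfl,
      inner_gradPos_snd G m hm i j k hij hik hjk w hrij hrik _ _ rfl rfl]
    field_simp
    ring
  · intro q _ hq
    rw [gradPos_pot_other G m i j q (Ne.symm hq.1) (Ne.symm hq.2)]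
    simp
  · simp
  · simp
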